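/- Multiplication by s is injective on the formal Brieskorn lattice: for every p ∈ A, if s·p ∈ M then p ∈ M; equivalently, the ℂ[[s]]-linear endomorphism of H = A/M induced by multiplication with s is injective. -/

import Mathlib

noncomputable section

open scoped Pointwise

/-- The formal partial derivative `∂ᵢ` with respect to the `i`th variable, determined by
`coeff α (∂ᵢ g) = (α i + 1) • coeff (α + eᵢ) g`. -/
def pd {σ : Type*} (i : σ) (g : MvPowerSeries σ ℂ) : MvPowerSeries σ ℂ :=
  fun α => ((α i : ℂ) + 1) * MvPowerSeries.coeff (α + Finsupp.single i 1) g

lemma coeff_pd {σ : Type*} (i : σ) (g : MvPowerSeries σ ℂ) (α : σ →₀ ℕ) :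
    MvPowerSeries.coeff α (pd i g) =
      ((α i : ℂ) + 1) * MvPowerSeries.coeff (α + Finsupp.single i 1) g := rfl

variable (n : ℕ)

/-- `R = ℂ[[x₁,…,xₙ]]`. -/
abbrev R' := MvPowerSeries (Fin n) ℂ

/-- `A = ℂ[[s,x₁,…,xₙ]]`, where `s` is the 0th variable and `xᵢ` is the variable
of index `i` (`1 ≤ i ≤ n`). -/
abbrev A' := MvPowerSeries (Fin (n + 1)) ℂ

/-- The variable `s` of `A`. -/
def sv : A' n := MvPowerSeries.X 0

/-- Forget the `s`-exponent of a multi-index of `A`. -/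
def tailF (β : Fin (n + 1) →₀ ℕ) : Fin n →₀ ℕ :=
  Finsupp.equivFunOnFinite.symm fun i => β i.succ

/-- The inclusion `R ⊆ A` as the subring of series not involving `s`. -/
def inclR (g : R' n) : A' n :=
  fun β => if β 0 = 0 then MvPowerSeries.coeff (tailF n β) g else 0

/-- The inclusion `ℂ[[s]] ⊆ A` as the subring of series in `s` alone. -/
def toA (p : PowerSeries ℂ) : A' n :=
  fun β => if tailF n β = 0 then PowerSeries.coeff (β 0) p else 0

lemma coeff_inclR (g : R' n) (β : Fin (n + 1) →₀ ℕ) :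
    MvPowerSeries.coeff β (inclR n g) =
      if β 0 = 0 then MvPowerSeries.coeff (tailF n β) g else 0 := rfl

/-- The `ℂ[[s]]`-linear operator `Fᵢ(g) = ∂ᵢ(f)·g − s·∂ᵢ(g)` on `A`. -/
def FF (f : R' n) (i : Fin n) (g : A' n) : A' n :=
  inclR n (pd i f) * g - sv n * pd i.succ g

/-- `M = range F₁ + ⋯ + range Fₙ`, so that `H = A/M` is the formal Brieskorn lattice. -/
def Mset (f : R' n) : Set (A' n) :=
  {a | ∃ q : Fin n → A' n, a = ∑ i, FF n f i (q i)}

/-- The Jacobian ideal `J(f) = ⟨∂₁f,…,∂ₙf⟩` of `R`. -/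
def Jf (f : R' n) : Ideal (R' n) :=
  Ideal.span (Set.range fun i : Fin n => pd i f)

/-- The maximal ideal `⟨x₁,…,xₙ⟩` of `R = ℂ[[x₁,…,xₙ]]`. -/
def mx : Ideal (R' n) :=
  Ideal.span (Set.range (MvPowerSeries.X : Fin n → R' n))

/-- The ideal `J(f)·A` of `A` generated by `∂₁(f),…,∂ₙ(f)`. -/
def JA (f : R' n) : Ideal (A' n) :=
  Ideal.span (Set.range fun i : Fin n => inclR n (pd i f))

/-- The ideal `⟨x₁,…,xₙ⟩·A` of `A` generated by the variables `x₁,…,xₙ` (not `s`). -/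
def XA : Ideal (A' n) :=
  Ideal.span (Set.range fun i : Fin n => (MvPowerSeries.X i.succ : A' n))

lemma pd_add {σ : Type*} (i : σ) (a b : MvPowerSeries σ ℂ) :
    pd i (a + b) = pd i a + pd i b := by
  ext α; simp [coeff_pd, mul_add]

lemma pd_smul {σ : Type*} (i : σ) (c : ℂ) (a : MvPowerSeries σ ℂ) :
    pd i (c • a) = c • pd i a := by
  ext α; simp [coeff_pd]; ring

lemma FF_add (f : R' n) (i : Fin n) (a b : A' n) :
    FF n f i (a + b) = FF n f i a + FF n f i b := by
  simp only [FF, pd_add, mul_add]; ring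

lemma FF_smul (f : R' n) (i : Fin n) (c : ℂ) (a : A' n) :
    FF n f i (c • a) = c • FF n f i a := by
  simp only [FF, pd_smul, Algebra.mul_smul_comm, smul_sub]

lemma FF_zero (f : R' n) (i : Fin n) : FF n f i 0 = 0 := by
  simpa using FF_smul n f i 0 0

/-- `M` as a `ℂ`-submodule of `A`. -/
def Msub (f : R' n) : Submodule ℂ (A' n) where
  carrier := Mset n f
  zero_mem' := ⟨0, by simp [FF_zero]⟩
  add_mem' := by
    rintro a b ⟨q, rfl⟩ ⟨q', rfl⟩
    exact ⟨q + q', by simp [FF_add, Finset.sum_add_distrib]⟩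
  smul_mem' := by
    rintro c a ⟨q, rfl⟩
    exact ⟨c • q, by simp [FF_smul, Finset.smul_sum]⟩

/-- The inclusion `R ⊆ A` as a `ℂ`-linear map. -/
def inclL : R' n →ₗ[ℂ] A' n where
  toFun := inclR n
  map_add' a b := by
    ext β; simp only [coeff_inclR, map_add]; split <;> simp
  map_smul' c a := by
    ext β; simp only [coeff_inclR, map_smul, RingHom.id_apply]; split <;> simp

/-!
Suppose `s p = ∑ Fᵢ qᵢ`. Modulo `s` this says that `q` is a relation `∑ qᵢ ∂ᵢf ≡ 0` between the
partial derivatives of `f`. Since `s, x₁ᵐ, …, xₙᵐ` is a regular sequence and every `xᵢᵐ` lies in the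
Jacobian ideal, the Koszul complex of `∂₁f, …, ∂ₙf` modulo `s` is exact in positive degrees, so
modulo `s` the relation `q` is a combination of the trivial relations `∂ᵢf eⱼ - ∂ⱼf eᵢ`. The
operators `Fᵢ` commute, so `F` maps the lift of such a relation in which each `∂ᵢf` is replaced by
`Fᵢ` to `0`; hence `∑ Fᵢ qᵢ = s ∑ Fᵢ tᵢ` for some `t`, and cancelling `s` gives `p = ∑ Fᵢ tᵢ`.
-/

section Koszul

open RingTheory.Sequence ExteriorAlgebra
open Ideal (ofList)

variable {S V : Type*} [CommRing S] [AddCommGroup V] [Module S V]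

instance exteriorAlgebra_free [Module.Free S V] : Module.Free S (ExteriorAlgebra S V) :=
  .of_equiv (DirectSum.decomposeLinearEquiv fun i : ℕ => ⋀[S]^i V).symm

lemma exteriorPower_eq_bot_of_finrank_lt [Module.Free S V] [Module.Finite S V] {l : ℕ}
    (hl : Module.finrank S V < l) : ⋀[S]^l V = ⊥ := by
  nontriviality S
  rw [← Submodule.subsingleton_iff_eq_bot, ← Module.finrank_eq_zero_iff_of_free (R := S),
    exteriorPower.finrank_eq, Nat.choose_eq_zero_of_lt hl]

lemma ι_mul_mem_exteriorPower (v : V) {l : ℕ} {u : ExteriorAlgebra S V} (hu : u ∈ ⋀[S]^l V) :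
    ι S v * u ∈ ⋀[S]^(l + 1) V := by
  rw [exteriorPower, pow_succ']
  exact Submodule.mul_mem_mul (LinearMap.mem_range_self _ v) hu

lemma isWeaklyRegular_of_flat {M : Type*} [AddCommGroup M] [Module S M] [Module.Flat S M]
    {rs : List S} (hrs : IsWeaklyRegular S rs) : IsWeaklyRegular M rs :=
  ((TensorProduct.rid S M).isWeaklyRegular_congr rs).1 hrs.isWeaklyRegular_lTensor

/-- The differential of the Koszul complex of a linear form `φ`: the degree `-1` antiderivation of
the exterior algebra that extends `φ`, encoded as contraction with `φ` on the total complex. -/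
def koszulDifferential (φ : V →ₗ[S] S) : ExteriorAlgebra S V →ₗ[S] ExteriorAlgebra S V :=
  CliffordAlgebra.contractLeft (Q := 0) φ

lemma koszulDifferential_algebraMap (φ : V →ₗ[S] S) (r : S) :
    koszulDifferential φ (algebraMap S _ r) = 0 :=
  CliffordAlgebra.contractLeft_algebraMap (Q := 0) φ r

lemma koszulDifferential_ι (φ : V →ₗ[S] S) (v : V) :
    koszulDifferential φ (ι S v) = algebraMap S _ (φ v) :=
  CliffordAlgebra.contractLeft_ι (Q := 0) φ v

lemma koszulDifferential_ι_mul (φ : V →ₗ[S] S) (v : V) (u : ExteriorAlgebra S V) :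
    koszulDifferential φ (ι S v * u) = φ v • u - ι S v * koszulDifferential φ u :=
  CliffordAlgebra.contractLeft_ι_mul (Q := 0) φ v u

lemma koszulDifferential_koszulDifferential (φ : V →ₗ[S] S) (u : ExteriorAlgebra S V) :
    koszulDifferential φ (koszulDifferential φ u) = 0 :=
  CliffordAlgebra.contractLeft_contractLeft (Q := 0) φ u

theorem exists_sub_koszulDifferential_mem [Module.Free S V] [Module.Finite S V] (φ : V →ₗ[S] S)
    {rs₀ rs : List S} (hreg : IsWeaklyRegular S (rs₀ ++ rs)) (hrs : ∀ r ∈ rs, r ∈ φ.range)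
    {l : ℕ} (hl : Module.finrank S V < l + rs.length) {u : ExteriorAlgebra S V}
    (hu : u ∈ ⋀[S]^l V)
    (hdu : koszulDifferential φ u ∈ ofList rs₀ • (⊤ : Submodule S (ExteriorAlgebra S V))) :
    ∃ z, u - koszulDifferential φ z ∈ ofList rs₀ • (⊤ : Submodule S (ExteriorAlgebra S V)) := by
  induction rs generalizing rs₀ l u with
  | nil =>
    rw [List.length_nil, add_zero] at hl
    rw [exteriorPower_eq_bot_of_finrank_lt hl, Submodule.mem_bot] at hu
    exact ⟨0, by simp [hu]⟩
  | cons r rs ih =>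
    obtain ⟨v, hv⟩ := hrs r List.mem_cons_self
    -- Modulo `rs₀` and `r`, the product `v ∧ u` is a cycle, hence by induction a boundary: modulo
    -- `rs₀` it is `d z + r w`. Applying `d` gives `r u ≡ r (d w)` modulo `rs₀`, and `r` cancels.
    have hvdu : ι S v * koszulDifferential φ u ∈
        ofList rs₀ • (⊤ : Submodule S (ExteriorAlgebra S V)) :=
      Submodule.smul_top_le_comap_smul_top _ (LinearMap.mulLeft S (ι S v)) hdu
    have hdvu : koszulDifferential φ (ι S v * u) = r • u - ι S v * koszulDifferential φ u := by
      rw [koszulDifferential_ι_mul, hv]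
    have hsup : ofList (rs₀ ++ [r]) • (⊤ : Submodule S (ExteriorAlgebra S V)) =
        ofList rs₀ • ⊤ ⊔ Ideal.span {r} • ⊤ := by
      rw [Ideal.ofList_append, Ideal.ofList_singleton, Submodule.sup_smul]
    obtain ⟨z, hz⟩ := ih (rs₀ := rs₀ ++ [r]) (by simpa using hreg)
      (fun r' hr' => hrs r' (List.mem_cons_of_mem r hr'))
      (by rw [List.length_cons] at hl; omega) (ι_mul_mem_exteriorPower v hu) (by
        rw [hdvu, hsup, sub_eq_add_neg, add_comm]
        exact Submodule.add_mem_sup (neg_mem hvdu)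
          (Submodule.smul_mem_smul (Ideal.mem_span_singleton_self r) trivial))
    rw [hsup, Submodule.ideal_span_singleton_smul, Submodule.mem_sup] at hz
    obtain ⟨y, hy, _, ⟨w, -, rfl⟩, hyw⟩ := hz
    have hr : r • (u - koszulDifferential φ w) =
        ι S v * koszulDifferential φ u + koszulDifferential φ y := by
      have h := congrArg (koszulDifferential φ) hyw
      rw [map_add, map_sub, koszulDifferential_koszulDifferential, sub_zero, hdvu,
        DistribSMul.toLinearMap_apply, map_smul] at h
      rw [smul_sub, sub_eq_iff_eq_add, add_assoc, h]
      abel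
    have hregr : IsSMulRegular
        (ExteriorAlgebra S V ⧸ ofList rs₀ • (⊤ : Submodule S (ExteriorAlgebra S V))) r :=
      ((isWeaklyRegular_cons_iff _ r rs).1
        ((isWeaklyRegular_append_iff _ rs₀ (r :: rs)).1 (isWeaklyRegular_of_flat hreg)).2).1
    exact ⟨w, mem_of_isSMulRegular_quotient_of_smul_mem hregr
      (hr ▸ add_mem hvdu (Submodule.smul_top_le_comap_smul_top _ _ hy))⟩

/-- The trivial relations `φ(v) w - φ(w) v` in the kernel of a linear form `φ`. For
`φ = (g₁, …, gₙ)` on `Sⁿ` these are the Koszul relations `gᵢ eⱼ - gⱼ eᵢ`. -/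
def koszulRelations (φ : V →ₗ[S] S) : Submodule S V :=
  Submodule.span S (Set.range fun x : V × V => φ x.1 • x.2 - φ x.2 • x.1)

lemma ιInv_ι_mul (v : V) (u : ExteriorAlgebra S V) :
    ιInv (ι S v * u) = algebraMapInv u • v := by
  -- `ιInv` goes through `TrivSqZeroExt S V`, for which it makes `V` a bimodule in this way.
  let _ : Module Sᵐᵒᵖ V := Module.compHom _ ((RingHom.id S).fromOpposite mul_comm)
  have _ : IsCentralScalar S V := ⟨fun _ _ => rfl⟩
  have hfst : (TrivSqZeroExt.fstHom S S V).comp toTrivSqZeroExt = algebraMapInv :=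
    ExteriorAlgebra.hom_ext (by ext; simp [algebraMapInv])
  simp [ιInv, ← hfst]

lemma algebraMapInv_koszulDifferential (φ : V →ₗ[S] S) (z : ExteriorAlgebra S V) :
    algebraMapInv (koszulDifferential φ z) = φ (ιInv z) := by
  induction z using CliffordAlgebra.left_induction with
  | algebraMap r =>
    rw [koszulDifferential_algebraMap]
    simp [ιInv, TrivSqZeroExt.algebraMap_eq_inl]
  | add x y hx hy => simp only [map_add, hx, hy]
  | ι_mul z v _ =>
    rw [koszulDifferential_ι_mul, ιInv_ι_mul]
    simp [algebraMapInv, mul_comm]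

lemma ιInv_koszulDifferential_mem_koszulRelations (φ : V →ₗ[S] S) (z : ExteriorAlgebra S V) :
    ιInv (koszulDifferential φ z) ∈ koszulRelations φ := by
  induction z using CliffordAlgebra.left_induction with
  | algebraMap r =>
    rw [koszulDifferential_algebraMap, map_zero]
    exact zero_mem _
  | add x y hx hy =>
    rw [map_add, map_add]
    exact add_mem hx hy
  | ι_mul z v _ =>
    rw [koszulDifferential_ι_mul, map_sub, map_smul, ιInv_ι_mul, algebraMapInv_koszulDifferential]
    exact Submodule.subset_span ⟨(v, ιInv z), rfl⟩

theorem mem_koszulRelations_sup_of_isWeaklyRegular [Module.Free S V] [Module.Finite S V]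
    {φ : V →ₗ[S] S} {rs₀ rs : List S} (hreg : IsWeaklyRegular S (rs₀ ++ rs))
    (hrs : ∀ r ∈ rs, r ∈ φ.range) (hlen : Module.finrank S V ≤ rs.length) {v : V}
    (hv : φ v ∈ ofList rs₀) : v ∈ koszulRelations φ ⊔ ofList rs₀ • ⊤ := by
  obtain ⟨z, hz⟩ := exists_sub_koszulDifferential_mem φ hreg hrs (l := 1) (u := ι S v) (by omega)
    (by simp [exteriorPower]) (by
      rw [koszulDifferential_ι, Algebra.algebraMap_eq_smul_one]
      exact Submodule.smul_mem_smul hv trivial)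
  have hz' : ιInv (ι S v - koszulDifferential φ z) ∈ ofList rs₀ • (⊤ : Submodule S V) :=
    Submodule.smul_top_le_comap_smul_top _ ιInv hz
  rw [map_sub, ι_leftInverse v] at hz'
  rw [← add_sub_cancel (ιInv (koszulDifferential φ z)) v]
  exact Submodule.add_mem_sup (ιInv_koszulDifferential_mem_koszulRelations φ z) hz'

end Koszul

section TwistedDerivations

open RingTheory.Sequence

variable {k A ι : Type*} [CommRing k] [CommRing A] [Algebra k A]

/-- The operator `a ↦ ∂f · a - s ∂a` attached to a derivation `∂`. Formally it is
`-s e^{f/s} ∘ ∂ ∘ e^{-f/s}`. -/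
def brieskornOp (d : Derivation k A A) (s f : A) : A →ₗ[k] A :=
  LinearMap.mulLeft k (d f) - LinearMap.mulLeft k s ∘ₗ d

lemma brieskornOp_apply (d : Derivation k A A) (s f a : A) :
    brieskornOp d s f a = d f * a - s * d a := rfl

lemma brieskornOp_mul_left {d : Derivation k A A} {s : A} (hs : d s = 0) (f a : A) :
    brieskornOp d s f (s * a) = s * brieskornOp d s f a := by
  simp only [brieskornOp_apply, Derivation.leibniz, hs, smul_eq_mul]
  ring

lemma brieskornOp_comm {d e : Derivation k A A} (hde : ∀ a, d (e a) = e (d a)) {s : A}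
    (hd : d s = 0) (he : e s = 0) (f a : A) :
    brieskornOp d s f (brieskornOp e s f a) = brieskornOp e s f (brieskornOp d s f a) := by
  simp only [brieskornOp_apply, map_sub, Derivation.leibniz, hd, he, hde, smul_eq_mul]
  ring

variable [Fintype ι]

/-- The map `(qᵢ)ᵢ ↦ ∑ᵢ (∂ᵢf · qᵢ - s ∂ᵢqᵢ)`, whose cokernel is the Brieskorn lattice of `f`
with respect to the derivations `∂ᵢ`. -/
def brieskornMap (D : ι → Derivation k A A) (s f : A) : (ι → A) →ₗ[k] A :=
  ∑ i, brieskornOp (D i) s f ∘ₗ LinearMap.proj i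

lemma brieskornMap_apply (D : ι → Derivation k A A) (s f : A) (q : ι → A) :
    brieskornMap D s f q = ∑ i, brieskornOp (D i) s f (q i) := by
  simp [brieskornMap]

variable {D : ι → Derivation k A A} {s : A}

lemma brieskornMap_smul_left (hs : ∀ i, D i s = 0) (f : A) (q : ι → A) :
    brieskornMap D s f (s • q) = s * brieskornMap D s f q := by
  simp only [brieskornMap_apply, Pi.smul_apply, smul_eq_mul, brieskornOp_mul_left (hs _),
    Finset.mul_sum]

lemma sum_sum_brieskornOp_brieskornOp_eq_zero (hD : ∀ i j a, D i (D j a) = D j (D i a))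
    (hs : ∀ i, D i s = 0) (f : A) (v w : ι → A) :
    ∑ i, ∑ j, brieskornOp (D i) s f (brieskornOp (D j) s f (v j * w i - w j * v i)) = 0 := by
  simp only [map_sub, Finset.sum_sub_distrib, sub_eq_zero]
  rw [Finset.sum_comm]
  refine Finset.sum_congr rfl fun i _ => Finset.sum_congr rfl fun j _ => ?_
  rw [brieskornOp_comm (hD j i) (hs j) (hs i), mul_comm]

lemma brieskornMap_koszul_relation (hD : ∀ i j a, D i (D j a) = D j (D i a))
    (hs : ∀ i, D i s = 0) (f : A) (v w : ι → A) :
    brieskornMap D s f ((∑ j, v j * D j f) • w - (∑ j, w j * D j f) • v) =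
      s * brieskornMap D s f fun i => ∑ j, D j (v j * w i - w j * v i) := by
  have hrel (i : ι) : ((∑ j, v j * D j f) • w - (∑ j, w j * D j f) • v) i =
      ∑ j, brieskornOp (D j) s f (v j * w i - w j * v i) +
        s * ∑ j, D j (v j * w i - w j * v i) := by
    simp only [Pi.sub_apply, Pi.smul_apply, smul_eq_mul, Finset.sum_mul, Finset.mul_sum,
      brieskornOp_apply, ← Finset.sum_sub_distrib, ← Finset.sum_add_distrib]
    exact Finset.sum_congr rfl fun j _ => by ring
  simp only [brieskornMap_apply, hrel, map_add, map_sum (brieskornOp _ _ _),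
    Finset.sum_add_distrib, sum_sum_brieskornOp_brieskornOp_eq_zero hD hs, zero_add,
    brieskornOp_mul_left (hs _), Finset.mul_sum]

lemma exists_brieskornMap_eq_mul (hD : ∀ i j a, D i (D j a) = D j (D i a))
    (hs : ∀ i, D i s = 0) (f : A) {q : ι → A}
    (hq : q ∈ koszulRelations (Fintype.linearCombination A fun i => D i f) ⊔
      Ideal.span {s} • ⊤) :
    ∃ t, brieskornMap D s f q = s * brieskornMap D s f t := by
  rw [Submodule.ideal_span_singleton_smul, Submodule.mem_sup] at hq
  obtain ⟨q₀, hq₀, _, ⟨r, -, rfl⟩, rfl⟩ := hq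
  suffices h : ∃ t, brieskornMap D s f q₀ = s * brieskornMap D s f t by
    obtain ⟨t, ht⟩ := h
    exact ⟨t + r, by rw [map_add, map_add, ht, DistribSMul.toLinearMap_apply,
      brieskornMap_smul_left hs, mul_add]⟩
  induction hq₀ using Submodule.closure_induction with
  | zero => exact ⟨0, by simp⟩
  | add x y _ _ hx hy =>
    obtain ⟨t, ht⟩ := hx
    obtain ⟨t', ht'⟩ := hy
    exact ⟨t + t', by rw [map_add, map_add, ht, ht', mul_add]⟩
  | smul_mem c x hx =>
    obtain ⟨⟨v, w⟩, rfl⟩ := hx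
    refine ⟨_, Eq.trans (congrArg _ ?_) (brieskornMap_koszul_relation hD hs f (c • v) w)⟩
    simp only [Fintype.linearCombination_apply, Pi.smul_apply, smul_eq_mul, smul_sub, smul_smul,
      Finset.sum_mul, mul_assoc, mul_comm c]

theorem brieskorn_s_injective_general (hD : ∀ i j a, D i (D j a) = D j (D i a))
    (hs : ∀ i, D i s = 0) {f : A} {rs : List A} (hreg : IsWeaklyRegular A (s :: rs))
    (hrs : ∀ r ∈ rs, r ∈ Ideal.span (Set.range fun i => D i f))
    (hlen : Fintype.card ι ≤ rs.length) {p : A}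
    (hp : s * p ∈ Set.range (brieskornMap D s f)) : p ∈ Set.range (brieskornMap D s f) := by
  nontriviality A
  obtain ⟨q, hq⟩ := hp
  have hsyz : Fintype.linearCombination A (fun i => D i f) q ∈ Ideal.ofList [s] := by
    rw [Ideal.ofList_singleton, Ideal.mem_span_singleton]
    refine ⟨p + ∑ i, D i (q i), ?_⟩
    rw [mul_add, ← hq, brieskornMap_apply, Finset.mul_sum, ← Finset.sum_add_distrib]
    exact Finset.sum_congr rfl fun i _ => by rw [brieskornOp_apply, smul_eq_mul]; ring
  have hq' := mem_koszulRelations_sup_of_isWeaklyRegular (rs₀ := [s]) hreg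
    (by rwa [Fintype.range_linearCombination]) (by simpa using hlen) hsyz
  rw [Ideal.ofList_singleton] at hq'
  obtain ⟨t, ht⟩ := exists_brieskornMap_eq_mul hD hs f hq'
  have hsreg : IsSMulRegular A s := ((isWeaklyRegular_cons_iff A s rs).1 hreg).1
  exact ⟨t, hsreg (ht.symm.trans hq)⟩

end TwistedDerivations

section PowerSeries

open MvPowerSeries RingTheory.Sequence

variable {σ τ k : Type*} [CommRing k]

lemma mem_span_X_pow_iff (e : σ → ℕ) (t : Finset σ) (u : MvPowerSeries σ k) :
    u ∈ Ideal.span ((fun i => (X i : MvPowerSeries σ k) ^ e i) '' t) ↔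
      ∀ α : σ →₀ ℕ, (∀ i ∈ t, α i < e i) → coeff α u = 0 := by
  classical
  constructor
  · intro hu α hα
    induction hu using Submodule.closure_induction with
    | zero => exact map_zero _
    | add x y _ _ hx hy => rw [map_add, hx, hy, add_zero]
    | smul_mem c x hx =>
      obtain ⟨i, hi, rfl⟩ := hx
      exact X_pow_dvd_iff.1 (dvd_mul_left _ c) α (hα i hi)
  · intro hu
    induction t using Finset.induction_on generalizing u with
    | empty =>
      obtain rfl : u = 0 := ext fun α => by rw [hu α (by simp), map_zero]
      exact zero_mem _
    | insert j t _ ih =>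
      let r : MvPowerSeries σ k := fun α => if α j < e j then coeff α u else 0
      have hcoeff (α : σ →₀ ℕ) : coeff α r = if α j < e j then coeff α u else 0 := rfl
      have hr : r ∈ Ideal.span ((fun i => (X i : MvPowerSeries σ k) ^ e i) '' t) :=
        ih r fun α hα => by
          rw [hcoeff, ite_eq_right_iff]
          exact fun hj => hu α (Finset.forall_mem_insert .. |>.2 ⟨hj, hα⟩)
      have hdvd : X j ^ e j ∣ u - r := X_pow_dvd_iff.2 fun α hα => by
        rw [map_sub, hcoeff, if_pos hα, sub_self]
      rw [← sub_add_cancel u r, Finset.coe_insert, Set.image_insert_eq, Ideal.span_insert]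
      exact Submodule.add_mem_sup (Ideal.mem_span_singleton.2 hdvd) hr

lemma isWeaklyRegular_X_pow (e : σ → ℕ) {l : List σ} (hl : l.Nodup) :
    IsWeaklyRegular (MvPowerSeries σ k) (l.map fun i => (X i : MvPowerSeries σ k) ^ e i) := by
  classical
  refine ⟨fun m hm => ?_⟩
  rw [List.length_map] at hm
  have hnot : l[m] ∉ l.take m := by
    rw [List.mem_take_iff_getElem]
    rintro ⟨j, hj, hjm⟩
    exact absurd ((hl.getElem_inj_iff).1 hjm) (by omega)
  have hideal : Ideal.ofList ((l.map fun i => (X i : MvPowerSeries σ k) ^ e i).take m) =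
      Ideal.span ((fun i => X i ^ e i) '' ((l.take m).toFinset : Set σ)) := by
    rw [Ideal.ofList, ← List.map_take]
    congr 1
    ext
    simp [-List.map_take]
  rw [List.getElem_map, hideal, smul_eq_mul, Ideal.mul_top,
    isSMulRegular_quotient_iff_mem_of_smul_mem]
  intro u hu
  rw [mem_span_X_pow_iff] at hu ⊢
  intro α hα
  have h := hu (Finsupp.single l[m] (e l[m]) + α) fun i hi => by
    have hne : l[m] ≠ i := by rintro rfl; exact hnot (List.mem_toFinset.1 hi)
    simpa [Finsupp.single_eq_of_ne' hne] using hα i hi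
  rwa [smul_eq_mul, X_pow_eq, coeff_add_monomial_mul, one_mul] at h

lemma pderiv_comm (i j : σ) (a : MvPowerSeries σ k) :
    pderiv k i (pderiv k j a) = pderiv k j (pderiv k i a) := by
  classical
  ext α
  obtain rfl | hij := eq_or_ne i j
  · rfl
  · simp only [coeff_pderiv, Finsupp.add_apply, Finsupp.single_eq_of_ne hij,
      Finsupp.single_eq_of_ne hij.symm, add_zero, add_right_comm α (Finsupp.single i 1)]
    ring

lemma pderiv_rename (e : σ ↪ τ) (i : σ) (g : MvPowerSeries σ k) :
    pderiv k (e i) (rename e g) = rename e (pderiv k i g) := by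
  classical
  ext β
  by_cases hβ : β ∈ Set.range (Finsupp.mapDomain e)
  · obtain ⟨α, rfl⟩ := hβ
    rw [← Finsupp.embDomain_eq_mapDomain, coeff_embDomain_rename, coeff_pderiv, coeff_pderiv,
      ← Finsupp.embDomain_single, ← Finsupp.embDomain_add, coeff_embDomain_rename,
      Finsupp.embDomain_apply_self]
  · rw [coeff_pderiv, coeff_rename_eq_zero, coeff_rename_eq_zero, zero_mul]
    · exact hβ
    · simp only [Finsupp.mem_range_mapDomain_iff _ e.injective, not_forall] at hβ ⊢
      obtain ⟨b, hb, hβb⟩ := hβ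
      exact ⟨b, hb, by simp [hβb]⟩

lemma pd_eq_pderiv (i : σ) (g : MvPowerSeries σ ℂ) : pd i g = pderiv ℂ i g := by
  ext α
  rw [coeff_pd, coeff_pderiv, mul_comm]

lemma inclR_eq_rename {n : ℕ} (g : R' n) : inclR n g = rename (Fin.succEmb n) g := by
  ext β
  rw [coeff_inclR]
  split_ifs with h
  · have hβ : Finsupp.embDomain (Fin.succEmb n) (tailF n β) = β := by
      ext i
      cases i using Fin.cases with
      | zero => rw [h, Finsupp.embDomain_of_notMem_range]; simp
      | succ i => exact Finsupp.embDomain_apply_self (Fin.succEmb n) (tailF n β) i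
    rw [← coeff_embDomain_rename, hβ]
  · refine (coeff_rename_eq_zero _ _ ?_).symm
    rintro ⟨α, rfl⟩
    exact h (Finsupp.mapDomain_of_notMem_range _ _ (by simp))

lemma pderiv_succ_inclR {n : ℕ} (i : Fin n) (f : R' n) :
    pderiv ℂ i.succ (inclR n f) = inclR n (pderiv ℂ i f) := by
  rw [inclR_eq_rename, inclR_eq_rename]
  exact pderiv_rename (Fin.succEmb n) i f

lemma Mset_eq_range_brieskornMap {n : ℕ} (f : R' n) :
    Mset n f = Set.range (brieskornMap (fun i : Fin n => pderiv ℂ i.succ) (sv n) (inclR n f)) := by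
  ext a
  simp only [Mset, FF, Set.mem_ofPred_eq, Set.mem_range, brieskornMap_apply, brieskornOp_apply,
    pderiv_succ_inclR, pd_eq_pderiv, eq_comm]

lemma pderiv_succ_sv {n : ℕ} (i : Fin n) : pderiv ℂ i.succ (sv n) = 0 :=
  pderiv_X_of_ne (Fin.succ_ne_zero i).symm

lemma isWeaklyRegular_sv_cons_X_pow (n m : ℕ) :
    IsWeaklyRegular (A' n) (sv n :: (List.finRange n).map fun i => X i.succ ^ m) := by
  have h := isWeaklyRegular_X_pow (k := ℂ) (Fin.cons 1 fun _ : Fin n => m)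
    (List.nodup_finRange (n + 1))
  simpa [List.finRange_succ, Function.comp_def, sv] using h

lemma X_pow_mem_span_pderiv_inclR {n m : ℕ} {f : R' n} (hiso : mx n ^ m ≤ Jf n f) :
    ∀ r ∈ (List.finRange n).map fun i => (X i.succ : A' n) ^ m,
      r ∈ Ideal.span (Set.range fun i : Fin n => pderiv ℂ i.succ (inclR n f)) := by
  intro r hr
  obtain ⟨i, -, rfl⟩ := List.mem_map.1 hr
  have hmem : (X i : R' n) ^ m ∈ Jf n f :=
    hiso (Ideal.pow_mem_pow (Ideal.subset_span (Set.mem_range_self i)) m)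
  have h := Ideal.mem_map_of_mem (rename (R := ℂ) (Fin.succEmb n)) hmem
  rw [Jf, Ideal.map_span, ← Set.range_comp, map_pow, rename_X] at h
  simp only [pderiv_succ_inclR]
  simpa only [Function.comp_def, pd_eq_pderiv, inclR_eq_rename, Fin.coe_succEmb] using h

end PowerSeries

/-- **Multiplication by `s` is injective on the formal Brieskorn lattice**:
if `s·p ∈ M` then `p ∈ M`; i.e. the endomorphism of `H = A/M` induced by
multiplication with `s` is injective. -/
theorem brieskorn_s_injective (n : ℕ) (hn : 1 ≤ n) (f : R' n)
    (hf0 : MvPowerSeries.constantCoeff f = 0)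
    (m : ℕ) (hm : 1 ≤ m) (hiso : mx n ^ m ≤ Jf n f) :
    ∀ p : A' n, sv n * p ∈ Mset n f → p ∈ Mset n f := by
  intro p hp
  rw [Mset_eq_range_brieskornMap] at hp ⊢
  exact brieskorn_s_injective_general (fun i j => pderiv_comm i.succ j.succ) pderiv_succ_sv
    (isWeaklyRegular_sv_cons_X_pow n m) (X_pow_mem_span_pderiv_inclR hiso) (by simp) hp
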